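/- arXiv:1911.10944 — 2 statements merged into one kernel-verified Lean document; each statement's English description precedes it below -/
import Mathlib

section
/- For every real y with -1 ≤ y < 1, the partial sums of the Legendre polynomials at y are uniformly bounded: there exists M ≥ 0 such that |∑_{l=0}^N P_l(y)| ≤ M for all N ∈ ℕ. -/
open Filter Topology

/-- The Legendre polynomials `P l` on `ℝ`, i.e. the orthogonal polynomials on `[-1,1]`
normalized by `P l 1 = 1`, defined via the Bonnet recurrence
`P 0 y = 1`, `P 1 y = y`, `(n+2) • P (n+2) y = (2n+3) y P (n+1) y - (n+1) P n y`. -/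
noncomputable def legendreP : ℕ → ℝ → ℝ
  | 0, _ => 1
  | 1, y => y
  | (n + 2), y =>
      ((2 * (n : ℝ) + 3) * y * legendreP (n + 1) y - ((n : ℝ) + 1) * legendreP n y) / ((n : ℝ) + 2)

lemma legendreP_rec (n : ℕ) (y : ℝ) :
    ((n : ℝ) + 2) * legendreP (n + 2) y =
      (2 * (n : ℝ) + 3) * y * legendreP (n + 1) y - ((n : ℝ) + 1) * legendreP n y := by
  have h : ((n : ℝ) + 2) ≠ 0 := by positivity
  rw [legendreP]
  field_simp

/-- The energy `P_{n+1}² - 2 y P_{n+1} P_n + P_n²` is at most its initial value `1 - y²`. -/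
lemma legendreP_energy (y : ℝ) (n : ℕ) :
    legendreP (n + 1) y ^ 2 - 2 * y * legendreP (n + 1) y * legendreP n y + legendreP n y ^ 2
      ≤ 1 - y ^ 2 := by
  induction n with
  | zero => simp only [legendreP]; nlinarith
  | succ n ih =>
    have hn : (0 : ℝ) ≤ n := Nat.cast_nonneg n
    have h2 : ((n : ℝ) + 2) ≠ 0 := by positivity
    have hr := legendreP_rec n y
    have e : legendreP (n + 2) y = (2 * y * legendreP (n + 1) y - legendreP n y)
        - (1 / ((n : ℝ) + 2)) * (y * legendreP (n + 1) y - legendreP n y) := by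
      apply mul_left_cancel₀ h2
      rw [hr]; field_simp; ring
    have hε : 0 ≤ 1 / ((n : ℝ) + 2) := by positivity
    have hε1 : 1 / ((n : ℝ) + 2) ≤ 1 := by
      rw [div_le_one (by positivity)]; linarith
    show legendreP (n + 2) y ^ 2 - 2 * y * legendreP (n + 2) y * legendreP (n + 1) y
      + legendreP (n + 1) y ^ 2 ≤ 1 - y ^ 2
    rw [e]
    generalize 1 / ((n : ℝ) + 2) = ε at *
    generalize legendreP (n + 1) y = a at *
    generalize legendreP n y = b at *
    have : 0 ≤ (ε * (2 - ε)) * (y * a - b) ^ 2 :=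
      mul_nonneg (mul_nonneg hε (by linarith)) (sq_nonneg _)
    nlinarith

lemma legendreP_neg_one (n : ℕ) :
    legendreP n (-1) = (-1) ^ n ∧ legendreP (n + 1) (-1) = (-1) ^ (n + 1) := by
  induction n with
  | zero => simp [legendreP]
  | succ n ih =>
    refine ⟨ih.2, ?_⟩
    have h2 : ((n : ℝ) + 2) ≠ 0 := by positivity
    apply mul_left_cancel₀ h2
    have hr := legendreP_rec n (-1)
    rw [ih.1, ih.2] at hr
    rw [show n + 1 + 1 = n + 2 from rfl, hr]
    ring

lemma legendreP_abs_le (y : ℝ) (hy₁ : -1 ≤ y) (hy₂ : y < 1) (n : ℕ) : |legendreP n y| ≤ 1 := by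
  rcases hy₁.eq_or_lt with h | h
  · rw [← h, (legendreP_neg_one n).1]; simp
  · have hE := legendreP_energy y n
    have hpos : 0 < 1 - y ^ 2 := by nlinarith
    rw [← sq_le_one_iff_abs_le_one]
    by_contra hc
    push Not at hc
    nlinarith [sq_nonneg (legendreP (n + 1) y - y * legendreP n y)]

/-- For every `-1 ≤ y < 1`, the partial sums `∑_{l=0}^N P l y` are uniformly bounded. -/
theorem legendre_partial_sums_bounded (y : ℝ) (hy₁ : -1 ≤ y) (hy₂ : y < 1) :
    ∃ M : ℝ, 0 ≤ M ∧ ∀ N : ℕ, |∑ l ∈ Finset.range (N + 1), legendreP l y| ≤ M := by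
  have hP := legendreP_abs_le y hy₁ hy₂
  obtain ⟨d, hd⟩ : ∃ d : ℕ → ℝ, ∀ n, d n = 1 / (2 * (2 * (n : ℝ) + 3)) := ⟨_, fun _ => rfl⟩
  have hd0 : ∀ n, 0 ≤ d n := fun n => by rw [hd]; positivity
  have hd1 : ∀ n, d n ≤ 1 := fun n => by
    have hn : (0 : ℝ) ≤ n := Nat.cast_nonneg n
    rw [hd, div_le_one (by positivity)]; linarith
  have hdm : ∀ n, d (n + 1) ≤ d n := fun n => by
    rw [hd, hd]; push_cast
    apply one_div_le_one_div_of_le (by positivity); linarith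
  obtain ⟨Z, hZ⟩ : ∃ Z : ℕ → ℝ, ∀ n, Z n = (1 - y) * (∑ l ∈ Finset.range (n + 1), legendreP l y)
      - legendreP n y / 2 + legendreP (n + 1) y / 2
      + d n * (legendreP n y + legendreP (n + 1) y) := ⟨_, fun _ => rfl⟩
  have hstep : ∀ n, Z (n + 1) = Z n
      + (d (n + 1) - d n) * (legendreP (n + 1) y + legendreP (n + 2) y) := fun n => by
    have hr := legendreP_rec n y
    have key : (legendreP (n + 2) y + legendreP n y) / 2 - y * legendreP (n + 1) y
        = d n * (legendreP n y - legendreP (n + 2) y) := by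
      rw [hd]
      field_simp
      linarith
    rw [hZ, hZ, Finset.sum_range_succ _ (n + 1)]
    show _ - _ + legendreP (n + 2) y / 2 + _ * (_ + legendreP (n + 2) y) = _
    linarith
  have hb : ∀ n, |Z n| + 2 * d n ≤ |Z 0| + 2 * d 0 := fun n => by
    induction n with
    | zero => exact le_rfl
    | succ n ih =>
      have h1 : |Z (n + 1)| ≤ |Z n| + (d n - d (n + 1)) * 2 := by
        rw [hstep]
        refine (abs_add_le _ _).trans ?_
        rw [abs_mul, abs_sub_comm, abs_of_nonneg (sub_nonneg.2 (hdm n))]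
        have h3 : |legendreP (n + 1) y + legendreP (n + 2) y| ≤ 2 :=
          (abs_add_le _ _).trans (by linarith [hP (n + 1), hP (n + 2)])
        have := mul_le_mul_of_nonneg_left h3 (sub_nonneg.2 (hdm n))
        linarith
      linarith
  have hy : 0 < 1 - y := by linarith
  refine ⟨(|Z 0| + 2 * d 0 + 3) / (1 - y), div_nonneg (by linarith [abs_nonneg (Z 0), hd0 0]) hy.le,
    fun N => ?_⟩
  rw [le_div_iff₀ hy, ← abs_of_pos hy, ← abs_mul]
  have hZN := abs_le.1 (show |Z N| ≤ |Z 0| + 2 * d 0 by linarith [hb N, hd0 N])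
  have e := hZ N
  have p1 := abs_le.1 (hP N)
  have p2 := abs_le.1 (hP (N + 1))
  have h5 : |d N * (legendreP N y + legendreP (N + 1) y)| ≤ 2 := by
    rw [abs_mul, abs_of_nonneg (hd0 N)]
    have h3 : |legendreP N y + legendreP (N + 1) y| ≤ 2 :=
      (abs_add_le _ _).trans (by linarith [hP N, hP (N + 1)])
    calc _ ≤ 1 * (2 : ℝ) := mul_le_mul (hd1 N) h3 (abs_nonneg _) zero_le_one
      _ = 2 := by norm_num
  have p3 := abs_le.1 h5
  rw [abs_le]
  constructor <;> linarith [hZN.1, hZN.2, p1.1, p1.2, p2.1, p2.2, p3.1, p3.2]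
end

section
/- For every real y with -1 ≤ y < 1, the series ∑_{l=1}^∞ (2l+1)·P_l(y)/(l(l+1)) converges and equals -log((e/2)·(1-y)) = -1 - log((1-y)/2). Equivalently, the Green's function of the Poisson equation on the unit sphere, G*(y) = (1/4π)·log((e/2)(1-y)), has the series representation G*(y) = -(1/4π)·∑_{l=1}^∞ (2l+1)P_l(y)/(l(l+1)). -/
open Filter Topology

lemma lp_rec (n : ℕ) (y : ℝ) : legendreP (n + 2) y =
    ((2 * (n : ℝ) + 3) * y * legendreP (n + 1) y - ((n : ℝ) + 1) * legendreP n y) / ((n : ℝ) + 2) := by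
  rw [legendreP]

/-- The quadratic energy. -/
noncomputable def enQ (n : ℕ) (t : ℝ) : ℝ :=
  legendreP n t ^ 2 - 2 * t * legendreP n t * legendreP (n + 1) t + legendreP (n + 1) t ^ 2

/-- The dissipation variable. -/
noncomputable def enD (n : ℕ) (t : ℝ) : ℝ := t * legendreP (n + 1) t - legendreP n t

lemma enQ_step (n : ℕ) (t : ℝ) :
    enQ n t - enQ (n + 1) t = (1 - (((n : ℝ) + 1) / (n + 2)) ^ 2) * enD n t ^ 2 := by
  have h : (n : ℝ) + 2 ≠ 0 := by positivity
  simp only [enQ, enD, lp_rec]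
  field_simp
  ring

lemma enQ_step_le (n : ℕ) (t : ℝ) : enD n t ^ 2 / ((n : ℝ) + 2) ≤ enQ n t - enQ (n + 1) t := by
  rw [enQ_step, div_eq_mul_inv, mul_comm]
  apply mul_le_mul_of_nonneg_right _ (sq_nonneg _)
  have h : (0 : ℝ) < (n : ℝ) + 2 := by positivity
  have : (1 - (((n : ℝ) + 1) / (n + 2)) ^ 2) - ((n : ℝ) + 2)⁻¹ = (n + 1) / (n + 2) ^ 2 := by
    field_simp
    ring
  have h2 : (0 : ℝ) ≤ ((n : ℝ) + 1) / (n + 2) ^ 2 := by positivity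
  linarith

lemma enQ_anti (n : ℕ) (t : ℝ) : enQ (n + 1) t ≤ enQ n t := by
  have := enQ_step_le n t
  have h2 : 0 ≤ enD n t ^ 2 / ((n : ℝ) + 2) := by positivity
  linarith

lemma enQ_le (n : ℕ) (t : ℝ) : enQ n t ≤ 1 - t ^ 2 := by
  induction n with
  | zero =>
    simp only [enQ, legendreP]
    apply le_of_eq; ring
  | succ n ih => exact (enQ_anti n t).trans ih

lemma enQ_nonneg (n : ℕ) (t : ℝ) (ht : t ^ 2 ≤ 1) : 0 ≤ enQ n t := by
  have : enQ n t = (1 - t ^ 2) * legendreP n t ^ 2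
      + (t * legendreP n t - legendreP (n + 1) t) ^ 2 := by
    simp only [enQ]; ring
  rw [this]
  have := mul_nonneg (sub_nonneg.2 ht) (sq_nonneg (legendreP n t))
  positivity

lemma enQ_ctrl (n : ℕ) (t : ℝ) (ht : t ^ 2 ≤ 1) :
    (1 - t ^ 2) * enQ n t ≤ 2 * enD (n + 1) t ^ 2 + 3 * enD n t ^ 2 := by
  set r : ℝ := ((n : ℝ) + 1) / (n + 2) with hr
  have hr0 : 0 ≤ r := by positivity
  have hr1 : r ≤ 1 := by
    rw [hr, div_le_one (by positivity)]; linarith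
  have h : (n : ℝ) + 2 ≠ 0 := by positivity
  have e1 : enD (n + 1) t = -(1 - t ^ 2) * legendreP (n + 1) t + t * r * enD n t := by
    simp only [enD, lp_rec, hr]
    field_simp
    ring
  have e2 : (1 - t ^ 2) * enQ n t
      = (enD (n + 1) t - t * r * enD n t) ^ 2 + (1 - t ^ 2) * enD n t ^ 2 := by
    rw [e1]; simp only [enQ, enD]; ring
  have hr2 : r ^ 2 ≤ 1 := by nlinarith
  rw [e2]
  have h3 : t ^ 2 * r ^ 2 ≤ t ^ 2 := by nlinarith [sq_nonneg t]
  have h4 := mul_le_mul_of_nonneg_right h3 (sq_nonneg (enD n t))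
  have h5 := mul_le_mul_of_nonneg_right ht (sq_nonneg (enD n t))
  nlinarith [sq_nonneg (enD (n + 1) t + t * r * enD n t)]

lemma enQ_sum (N : ℕ) (t : ℝ) (ht : t ^ 2 ≤ 1) :
    2 * enQ (N + 1) t + 3 * enQ N t
      + (1 - t ^ 2) * enQ N t * ∑ n ∈ Finset.range N, 1 / ((n : ℝ) + 3) ≤ 5 := by
  induction N with
  | zero =>
    have h0 := enQ_le 0 t
    have h1 := enQ_le 1 t
    simp only [Finset.range_zero, Finset.sum_empty, mul_zero]
    nlinarith [sq_nonneg t]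
  | succ N ih =>
    rw [Finset.sum_range_succ]
    set H := ∑ n ∈ Finset.range N, 1 / ((n : ℝ) + 3) with hH
    have hH0 : 0 ≤ H := Finset.sum_nonneg fun i _ => by positivity
    have a0 := enQ_anti N t
    have s0 := enQ_step_le N t
    have s1 := enQ_step_le (N + 1) t
    have c := enQ_ctrl N t ht
    have p3 : (0 : ℝ) < (N : ℝ) + 3 := by positivity
    have s0' : enD N t ^ 2 / ((N : ℝ) + 3) ≤ enQ N t - enQ (N + 1) t :=
      (div_le_div_of_nonneg_left (sq_nonneg _) (by positivity) (by linarith)).trans s0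
    have s1' : enD (N + 1) t ^ 2 / ((N : ℝ) + 3) ≤ enQ (N + 1) t - enQ (N + 2) t := by
      have : ((N + 1 : ℕ) : ℝ) + 2 = N + 3 := by push_cast; ring
      rwa [this] at s1
    have w : 0 ≤ 1 - t ^ 2 := by linarith
    have c1 : (1 - t ^ 2) * enQ (N + 1) t ≤ (1 - t ^ 2) * enQ N t :=
      mul_le_mul_of_nonneg_left a0 w
    have c2 := mul_le_mul_of_nonneg_right c1 hH0
    have c3 : (1 - t ^ 2) * enQ (N + 1) t / ((N : ℝ) + 3) ≤
        (2 * enD (N + 1) t ^ 2 + 3 * enD N t ^ 2) / ((N : ℝ) + 3) :=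
      div_le_div_of_nonneg_right (c1.trans c) p3.le
    have c4 : (2 * enD (N + 1) t ^ 2 + 3 * enD N t ^ 2) / ((N : ℝ) + 3) =
      2 * (enD (N + 1) t ^ 2 / ((N : ℝ) + 3)) + 3 * (enD N t ^ 2 / ((N : ℝ) + 3)) := by ring
    have c5 : (1 - t ^ 2) * enQ (N + 1) t * (H + 1 / ((N : ℝ) + 3)) =
      (1 - t ^ 2) * enQ (N + 1) t * H + (1 - t ^ 2) * enQ (N + 1) t / ((N : ℝ) + 3) := by ring
    rw [c5]
    linarith

lemma harm_tendsto : Tendsto (fun N : ℕ => ∑ n ∈ Finset.range N, 1 / ((n : ℝ) + 3)) atTop atTop := by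
  rw [← not_summable_iff_tendsto_nat_atTop_of_nonneg (fun n => by positivity)]
  intro h
  have := (summable_nat_add_iff (f := fun n : ℕ => 1 / (n : ℝ)) 3).1 (by simpa using h)
  exact Real.not_summable_one_div_natCast this

lemma enQ_tendsto (t : ℝ) (ht : t ^ 2 < 1) : Tendsto (fun N => enQ N t) atTop (𝓝 0) := by
  have w : 0 < 1 - t ^ 2 := by linarith
  have h1 := harm_tendsto.const_mul_atTop w
  have h2 := h1.const_div_atTop (5 : ℝ)
  refine tendsto_of_tendsto_of_tendsto_of_le_of_le' tendsto_const_nhds h2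
    (Eventually.of_forall fun N => enQ_nonneg N t ht.le) ?_
  filter_upwards [h1.eventually_gt_atTop 0] with N hN
  rw [le_div_iff₀ hN]
  have := enQ_sum N t ht.le
  have q0 := enQ_nonneg N t ht.le
  have q1 := enQ_nonneg (N + 1) t ht.le
  nlinarith

lemma sum_sq_le (n : ℕ) (t : ℝ) (h1 : -1 ≤ t) (h2 : t < 1) :
    (legendreP n t + legendreP (n + 1) t) ^ 2 ≤ 2 * enQ n t / (1 - t) := by
  rw [le_div_iff₀ (by linarith)]
  have : 0 ≤ (1 + t) * (legendreP n t - legendreP (n + 1) t) ^ 2 :=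
    mul_nonneg (by linarith) (sq_nonneg _)
  simp only [enQ]
  nlinarith

lemma sum_abs_le (n : ℕ) (t : ℝ) (h1 : -1 ≤ t) (h2 : t < 1) :
    |legendreP n t + legendreP (n + 1) t| ≤ Real.sqrt 2 * Real.sqrt (1 + t) := by
  rw [← Real.sqrt_mul (by norm_num)]
  apply Real.abs_le_sqrt
  refine (sum_sq_le n t h1 h2).trans ?_
  rw [div_le_iff₀ (by linarith)]
  have := enQ_le n t
  nlinarith

lemma sum_tendsto (t : ℝ) (h1 : -1 < t) (h2 : t < 1) :
    Tendsto (fun n => legendreP n t + legendreP (n + 1) t) atTop (𝓝 0) := by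
  have hq := ((enQ_tendsto t (by nlinarith)).const_mul 2).div_const (1 - t)
  simp only [mul_zero, zero_div] at hq
  have hs : Tendsto (fun n => (legendreP n t + legendreP (n + 1) t) ^ 2) atTop (𝓝 0) :=
    squeeze_zero (fun _ => sq_nonneg _) (fun n => sum_sq_le n t h1.le h2) hq
  have := (Real.continuous_sqrt.tendsto 0).comp hs
  rw [Real.sqrt_zero] at this
  rw [tendsto_zero_iff_abs_tendsto_zero]
  refine this.congr fun n => ?_
  simp [Function.comp, Real.sqrt_sq_eq_abs]

lemma lp_cont : ∀ n : ℕ, Continuous (legendreP n)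
  | 0 => by
    have : legendreP 0 = fun _ => 1 := by funext y; rw [legendreP]
    rw [this]; exact continuous_const
  | 1 => by
    have : legendreP 1 = fun y => y := by funext y; rw [legendreP]
    rw [this]; exact continuous_id
  | (n + 2) => by
    have h0 := lp_cont n
    have h1 := lp_cont (n + 1)
    have := funext (lp_rec n)
    rw [this]; fun_prop

lemma lp_deriv (y : ℝ) (hy : 1 - y ^ 2 ≠ 0) : ∀ n : ℕ, HasDerivAt (legendreP n)
    (((n : ℝ) + 1) * (y * legendreP n y - legendreP (n + 1) y) / (1 - y ^ 2)) y
  | 0 => by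
    have : legendreP 0 = fun _ => 1 := by funext y; rw [legendreP]
    have e : (((0 : ℕ) : ℝ) + 1) * (y * legendreP 0 y - legendreP (0 + 1) y) / (1 - y ^ 2) = 0 := by
      simp [legendreP]
    rw [e, this]; exact hasDerivAt_const _ _
  | 1 => by
    have : legendreP 1 = fun y => y := by funext y; rw [legendreP]
    have e : (((1 : ℕ) : ℝ) + 1) * (y * legendreP 1 y - legendreP (1 + 1) y) / (1 - y ^ 2) = 1 := by
      have : legendreP (1 + 1) y = (3 * y ^ 2 - 1) / 2 := by
        rw [lp_rec 0 y]; simp [legendreP]; ring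
      rw [this]; simp only [legendreP]; field_simp; push_cast; ring
    rw [e, this]; exact hasDerivAt_id _
  | (n + 2) => by
    have h0 := lp_deriv y hy n
    have h1 := lp_deriv y hy (n + 1)
    have := funext (lp_rec n)
    rw [this]
    have h := ((((hasDerivAt_id y).const_mul (2 * (n : ℝ) + 3)).mul h1).sub
      (h0.const_mul ((n : ℝ) + 1))).div_const ((n : ℝ) + 2)
    refine h.congr_deriv ?_
    have p2 : (n : ℝ) + 2 ≠ 0 := by positivity
    have p3 : (n : ℝ) + 3 ≠ 0 := by positivity
    have p3' : (n : ℝ) + 1 + 2 ≠ 0 := by positivity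
    have e3 := lp_rec (n + 1) y
    have e2 := lp_rec n y
    simp only [show n + 1 + 1 = n + 2 from rfl, show n + 1 + 2 = n + 3 from rfl,
      show n + 2 + 1 = n + 3 from rfl] at *
    rw [e3, e2]
    push_cast
    simp only [id]
    field_simp
    ring

/-- The partial sums. -/
noncomputable def pS (N : ℕ) (y : ℝ) : ℝ := ∑ l ∈ Finset.Icc 1 N,
        (2 * (l : ℝ) + 1) * legendreP l y / ((l : ℝ) * ((l : ℝ) + 1))

lemma pS_succ (N : ℕ) (y : ℝ) : pS (N + 1) y = pS N y +
    (2 * ((N : ℝ) + 1) + 1) * legendreP (N + 1) y / (((N : ℝ) + 1) * ((N : ℝ) + 1 + 1)) := by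
  simp only [pS]
  rw [Finset.sum_Icc_succ_top (by omega)]
  push_cast
  rfl

lemma pS_cont (N : ℕ) : Continuous (pS N) := by
  unfold pS
  have := lp_cont
  fun_prop

lemma pS_deriv (y : ℝ) (hy : 1 - y ^ 2 ≠ 0) (N : ℕ) : HasDerivAt (pS N)
    ((1 + y - (legendreP N y + legendreP (N + 1) y)) / (1 - y ^ 2)) y := by
  induction N with
  | zero =>
    have : pS 0 = fun _ => 0 := by funext y; simp [pS]
    rw [this]
    refine (hasDerivAt_const _ _).congr_deriv ?_
    simp [legendreP]
  | succ N ih =>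
    have := funext (pS_succ N)
    rw [this]
    refine (ih.add (((lp_deriv y hy (N + 1)).const_mul _).div_const _)).congr_deriv ?_
    have p1 : (N : ℝ) + 1 ≠ 0 := by positivity
    have p2 : (N : ℝ) + 2 ≠ 0 := by positivity
    have p2' : (N : ℝ) + 1 + 1 ≠ 0 := by positivity
    have e2 := lp_rec N y
    simp only [show N + 1 + 1 = N + 2 from rfl] at *
    rw [e2]
    push_cast
    field_simp
    ring

lemma lp_neg_one : ∀ n : ℕ, legendreP n (-1) = (-1) ^ n
  | 0 => by simp [legendreP]
  | 1 => by simp [legendreP]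
  | (n + 2) => by
    rw [lp_rec, lp_neg_one n, lp_neg_one (n + 1)]
    have p2 : (n : ℝ) + 2 ≠ 0 := by positivity
    field_simp
    ring

lemma pS_neg_one (N : ℕ) : pS N (-1) = -1 + (-1) ^ N / ((N : ℝ) + 1) := by
  induction N with
  | zero => simp [pS]
  | succ N ih =>
    rw [pS_succ, ih, lp_neg_one]
    have p1 : (N : ℝ) + 1 ≠ 0 := by positivity
    have p2' : (N : ℝ) + 1 + 1 ≠ 0 := by positivity
    push_cast
    field_simp
    ring

lemma pS_neg_one_tendsto : Tendsto (fun N => pS N (-1)) atTop (𝓝 (-1)) := by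
  simp only [pS_neg_one]
  have : Tendsto (fun N : ℕ => (-1 : ℝ) ^ N / ((N : ℝ) + 1)) atTop (𝓝 0) := by
    rw [tendsto_zero_iff_abs_tendsto_zero]
    refine (tendsto_one_div_add_atTop_nhds_zero_nat (𝕜 := ℝ)).congr fun n => ?_
    have : (0 : ℝ) < (n : ℝ) + 1 := by positivity
    simp [abs_div, abs_of_pos this]
  simpa using this.const_add (-1)

/-- The remainder integrand. -/
noncomputable def rem (N : ℕ) (t : ℝ) : ℝ :=
  -(legendreP N t + legendreP (N + 1) t) / (1 - t ^ 2)

lemma rem_bound (N : ℕ) (y t : ℝ) (hy : y < 1) (h1 : -1 < t) (h2 : t ≤ y) :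
    ‖rem N t‖ ≤ Real.sqrt 2 / (1 - y) * (t + 1) ^ (-(1 / 2) : ℝ) := by
  have hp : 0 < t + 1 := by linarith
  have hs : 0 < Real.sqrt (1 + t) := Real.sqrt_pos.2 (by linarith)
  have hss : Real.sqrt (1 + t) * Real.sqrt (1 + t) = 1 + t := Real.mul_self_sqrt (by linarith)
  have hm : 0 < 1 - t ^ 2 := by nlinarith
  rw [Real.rpow_neg hp.le, ← Real.sqrt_eq_rpow, add_comm t 1, rem, Real.norm_eq_abs, abs_div,
    abs_neg, abs_of_pos hm]
  refine (div_le_div_of_nonneg_right (sum_abs_le N t h1.le (by linarith)) hm.le).trans ?_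
  have e : 1 - t ^ 2 = (1 - t) * (Real.sqrt (1 + t) * Real.sqrt (1 + t)) := by rw [hss]; ring
  have hy' : 0 < 1 - y := by linarith
  have ht' : 0 < 1 - t := by linarith
  have e2 : Real.sqrt 2 * Real.sqrt (1 + t) / (1 - t ^ 2)
      = Real.sqrt 2 / (1 - t) * (Real.sqrt (1 + t))⁻¹ := by
    rw [e]; field_simp
  rw [e2]
  apply mul_le_mul_of_nonneg_right _ (by positivity)
  exact div_le_div_of_nonneg_left (by positivity) hy' (by linarith)

lemma bound_int (y : ℝ) : IntervalIntegrable
    (fun t : ℝ => Real.sqrt 2 / (1 - y) * (t + 1) ^ (-(1 / 2) : ℝ)) MeasureTheory.volume (-1) y := by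
  apply IntervalIntegrable.const_mul
  have h := (intervalIntegral.intervalIntegrable_rpow' (a := 0) (b := y + 1)
    (r := -(1 / 2)) (by norm_num)).comp_add_right 1
  simpa using h

lemma rem_meas (N : ℕ) : Measurable (rem N) := by
  unfold rem
  have h0 := (lp_cont N).measurable
  have h1 := (lp_cont (N + 1)).measurable
  fun_prop

lemma rem_int (N : ℕ) (y : ℝ) (h1 : -1 < y) (hy : y < 1) :
    IntervalIntegrable (rem N) MeasureTheory.volume (-1) y := by
  refine (bound_int y).mono_fun (rem_meas N).aestronglyMeasurable ?_
  rw [Filter.EventuallyLE, MeasureTheory.ae_restrict_iff' measurableSet_uIoc]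
  refine Eventually.of_forall fun t ht => ?_
  rw [Set.uIoc_of_le h1.le] at ht
  exact (rem_bound N y t hy ht.1 ht.2).trans (Real.le_norm_self _)

lemma rem_tendsto (y : ℝ) (h1 : -1 < y) (hy : y < 1) :
    Tendsto (fun N => ∫ t in (-1)..y, rem N t) atTop (𝓝 0) := by
  have := intervalIntegral.tendsto_integral_filter_of_dominated_convergence
    (F := rem) (f := fun _ => (0 : ℝ)) (l := atTop) (a := -1) (b := y) (μ := MeasureTheory.volume)
    (fun t : ℝ => Real.sqrt 2 / (1 - y) * (t + 1) ^ (-(1 / 2) : ℝ))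
    (Eventually.of_forall fun N => (rem_meas N).aestronglyMeasurable)
    (Eventually.of_forall fun N => Eventually.of_forall fun t ht => by
      rw [Set.uIoc_of_le h1.le] at ht
      exact rem_bound N y t hy ht.1 ht.2)
    (bound_int y)
    (Eventually.of_forall fun t ht => by
      rw [Set.uIoc_of_le h1.le] at ht
      have := ((sum_tendsto t ht.1 (by linarith [ht.2])).neg).div_const (1 - t ^ 2)
      simpa [rem] using this)
  simpa using this

lemma pS_eq (N : ℕ) (y : ℝ) (h1 : -1 < y) (hy : y < 1) :
    pS N y = pS N (-1) + Real.log 2 - Real.log (1 - y) + ∫ t in (-1)..y, rem N t := by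
  have := intervalIntegral.integral_eq_sub_of_hasDerivAt_of_le (a := -1) (b := y)
    (f := fun t => pS N t + Real.log (1 - t)) (f' := rem N) h1.le
    (by
      refine (pS_cont N).continuousOn.add (ContinuousOn.log (by fun_prop) ?_)
      intro t ht
      have := ht.2
      linarith)
    (by
      intro t ht
      have a1 := ht.1
      have a2 := ht.2
      have ne : 1 - t ≠ 0 := by linarith
      have ne' : 1 + t ≠ 0 := by linarith
      have ne2 : 1 - t ^ 2 ≠ 0 := by
        have : 0 < 1 - t ^ 2 := by nlinarith
        exact this.ne'
      refine ((pS_deriv t ne2 N).add (((hasDerivAt_id t).const_sub 1).log ne)).congr_deriv ?_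
      have e : 1 - t ^ 2 = (1 - t) * (1 + t) := by ring
      simp only [rem, id, e]
      field_simp
      ring)
    (rem_int N y h1 hy)
  rw [this]
  norm_num

/-- For `-1 ≤ y < 1`, the series `∑_{l=1}^∞ (2l+1) P l y / (l(l+1))` converges and equals
`-log((e/2)(1-y)) = -1 - log((1-y)/2)`. -/
theorem poisson_green_series (y : ℝ) (hy₁ : -1 ≤ y) (hy₂ : y < 1) :
    Tendsto (fun N : ℕ => ∑ l ∈ Finset.Icc 1 N,
        (2 * (l : ℝ) + 1) * legendreP l y / ((l : ℝ) * ((l : ℝ) + 1))) atTop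
      (𝓝 (-Real.log (Real.exp 1 / 2 * (1 - y)))) ∧
    -Real.log (Real.exp 1 / 2 * (1 - y)) = -1 - Real.log ((1 - y) / 2) := by
  have hp : 1 - y ≠ 0 := by linarith
  have key : -Real.log (Real.exp 1 / 2 * (1 - y)) = -1 - Real.log ((1 - y) / 2) := by
    rw [show Real.exp 1 / 2 * (1 - y) = Real.exp 1 * ((1 - y) / 2) by ring,
      Real.log_mul (Real.exp_pos 1).ne' (by positivity), Real.log_exp]
    ring
  refine ⟨?_, key⟩
  rw [key]
  change Tendsto (fun N => pS N y) atTop _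
  rcases hy₁.eq_or_lt with h | h
  · subst h
    have e : (-1 : ℝ) - Real.log ((1 - -1) / 2) = -1 := by norm_num
    rw [e]
    exact pS_neg_one_tendsto
  · simp only [pS_eq _ y h hy₂]
    have := ((pS_neg_one_tendsto.add_const (Real.log 2)).sub_const (Real.log (1 - y))).add
      (rem_tendsto y h hy₂)
    convert this using 2
    rw [Real.log_div hp (by norm_num)]
    ring
end
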